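/- There exist constants c > 0, C > 0, μ > 0 and δ₀ > 0 such that for all δ ∈ (0, δ₀] and all h ∈ Z with ‖h − Φ_LSW * Φ_LSW‖_Z ≤ μ one has c ≤ R_δ[h] ≤ C; moreover, for every η > 0 there is δ₁ ∈ (0, δ₀] such that for all δ ∈ (0, δ₁] and all such h: |Ĝ_i[h; δ] − K_i^δ·R_δ[h]| ≤ η·K_i^δ·R_δ[h] for i = 1, 2. -/

import Mathlib

/-!
Write `D_δ(z) = 1 + z - (λ_LSW - δ) z^(1/3)`, so that `a_δ = 1 / D_δ` and `b_δ = 1 + D_δ'`. Then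
`a_δ b_δ = a_δ + (log D_δ)'`, and with `E(x) = exp (∫₀ˣ a_δ)` every exponential in the statement is
explicit (`exp_ab`): on `[0, 1]`

* `ρ_δ(ξ) = ξ E(ξ) / (D_δ(1) E(1))`,
* `Γ̂_i(ξ) = D_δ(ξ) E(ξ) J_i(ξ)`, where `J_i(ξ) = ∫₀^ξ γ_i / (D_δ E)`.

Bounds on `R_δ[h]`. The function `D_δ(1)` stays away from `0` and `E` is increasing, so `ρ_δ` is
bounded uniformly in `δ` (`rhoF_le`). On `[0.6, 0.7]` it is bounded below (`rhoF_ge`), because the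
double root of `D_0` is at `1/2`; there `Φ_LSW * Φ_LSW` is bounded below as well, and it is
nonnegative and bounded on `[0, 1]` (`conv_bounds`). A small sup-norm perturbation `h` of
`Φ_LSW * Φ_LSW` keeps the resulting bounds.

Approximation. The difference is
`Ĝ_i - K_i R_δ[h] = -∫₀¹ ξ E(ξ) (J_i(1) - J_i(ξ)) h(ξ) dξ`. As `γ_i ≤ 1`, the integrand of `J_i` is at
most `-(1/E)'`, whence `0 ≤ E(ξ) (J_i(1) - J_i(ξ)) ≤ 1` (`J_diff`) and the difference is bounded by
`sup |h|`, uniformly in `δ` (`G_diff`). On the other hand `D_δ(z) ≤ 3 (z - 1/2)² + δ` to the right of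
`1/2`, so `∫ a_δ` across `1/2` is at least of order `δ^(-1/2)` (`a_blowup`) and `K_i^δ → ∞`
(`Kc_lower`). Since `R_δ[h]` is bounded below, `η K_i R_δ[h]` eventually exceeds the bound.
-/

open MeasureTheory Set Filter

/-- λ_LSW := 3 (1/2)^(2/3) -/
noncomputable def lamLSW : ℝ := 3 * (1/2 : ℝ) ^ ((2:ℝ)/3)

/-- a_δ(z) := 1/(1 + z − (λ_LSW − δ) z^(1/3)) -/
noncomputable def aF (δ z : ℝ) : ℝ := 1 / (1 + z - (lamLSW - δ) * z ^ ((1:ℝ)/3))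

/-- b_δ(z) := 2 − (1/3)(λ_LSW − δ) z^(−2/3) -/
noncomputable def bF (δ z : ℝ) : ℝ := 2 - (1/3) * (lamLSW - δ) * z ^ (-(2:ℝ)/3)

/-- ‖Φ‖_sup := sup_{0≤z≤1} |Φ(z)| -/
noncomputable def normSup (Φ : ℝ → ℝ) : ℝ := sSup ((fun z => |Φ z|) '' Icc (0:ℝ) 1)

/-- ‖Φ‖_tail := sup_{z≥1} |Φ(z)| e^{β₁ z} z^{β₂} -/
noncomputable def normTail (β₁ β₂ : ℝ) (Φ : ℝ → ℝ) : ℝ :=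
  sSup ((fun z => |Φ z| * Real.exp (β₁ * z) * z ^ β₂) '' Ici (1:ℝ))

/-- ‖Φ‖_Z := ‖Φ‖_sup + ‖Φ‖_tail -/
noncomputable def normZ (β₁ β₂ : ℝ) (Φ : ℝ → ℝ) : ℝ := normSup Φ + normTail β₁ β₂ Φ

/-- membership in the space Z: measurable with finite norm -/
def memZ (β₁ β₂ : ℝ) (Φ : ℝ → ℝ) : Prop :=
  Measurable Φ ∧ BddAbove ((fun z => |Φ z|) '' Icc (0:ℝ) 1) ∧
    BddAbove ((fun z => |Φ z| * Real.exp (β₁ * z) * z ^ β₂) '' Ici (1:ℝ))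

/-- (Φ₁ * Φ₂)(z) := (1/2) ∫₀^z Φ₁(z−y) Φ₂(y) dy -/
noncomputable def conv (Φ₁ Φ₂ : ℝ → ℝ) (z : ℝ) : ℝ :=
  (1/2) * ∫ y in (0:ℝ)..z, Φ₁ (z - y) * Φ₂ y

/-- unnormalized solution of the homogeneous ODE -/
noncomputable def psi0 (δ ε εt z : ℝ) : ℝ :=
  Real.exp (-∫ y in (0:ℝ)..z, aF δ y * (bF δ y - εt * y - ε))

/-- ψ(z; ε, ε̃, δ), normalized so that ∫₀¹ z ψ dz = 1 -/
noncomputable def psi (δ ε εt z : ℝ) : ℝ :=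
  psi0 δ ε εt z / ∫ t in (0:ℝ)..1, t * psi0 δ ε εt t

/-- the smooth LSW self-similar profile -/
noncomputable def PhiLSW (z : ℝ) : ℝ :=
  if z ≤ 1/2 then
    Real.exp (-∫ y in (0:ℝ)..z, aF 0 y * bF 0 y) /
      ∫ t in (0:ℝ)..(1/2 : ℝ), t * Real.exp (-∫ y in (0:ℝ)..t, aF 0 y * bF 0 y)
  else 0

/-- ρ_δ(ξ) := ξ a_δ(ξ) exp(−∫_ξ^1 a_δ b_δ) -/
noncomputable def rhoF (δ ξ : ℝ) : ℝ :=
  ξ * aF δ ξ * Real.exp (-∫ y in ξ..(1:ℝ), aF δ y * bF δ y)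

/-- R_δ[h] := ∫₀¹ ρ_δ(ξ) h(ξ) dξ -/
noncomputable def Rdel (δ : ℝ) (h : ℝ → ℝ) : ℝ := ∫ ξ in (0:ℝ)..1, rhoF δ ξ * h ξ

/-- R₀[h] := ∫_{1/2}^1 ξ a₀(ξ) h(ξ) exp(−∫_ξ^1 a₀ b₀) dξ -/
noncomputable def Rzero (h : ℝ → ℝ) : ℝ :=
  ∫ ξ in (1/2 : ℝ)..1, ξ * aF 0 ξ * h ξ * Real.exp (-∫ y in ξ..(1:ℝ), aF 0 y * bF 0 y)

/-- γ₁(z) = z, γ₂(z) = 1 -/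
noncomputable def gamF (i : ℕ) (z : ℝ) : ℝ := if i = 1 then z else 1

/-- Γ_i(ξ; ε, ε̃, δ) -/
noncomputable def Gam (i : ℕ) (δ ε εt ξ : ℝ) : ℝ :=
  ∫ z in (0:ℝ)..ξ, gamF i z * Real.exp (∫ y in z..ξ, aF δ y * (bF δ y - εt * y - ε))

/-- Γ̂_i(ξ; δ) := Γ_i(ξ; 0, 0, δ) -/
noncomputable def GamHat (i : ℕ) (δ ξ : ℝ) : ℝ := Gam i δ 0 0 ξ

/-- K_i^δ := Γ̂_i(1; δ) -/
noncomputable def Kc (i : ℕ) (δ : ℝ) : ℝ := GamHat i δ 1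

/-- Ĝ_i[h; δ] := ∫₀¹ ξ a_δ(ξ) h(ξ) Γ̂_i(ξ; δ) dξ -/
noncomputable def Ghat (i : ℕ) (δ : ℝ) (h : ℝ → ℝ) : ℝ :=
  ∫ ξ in (0:ℝ)..1, ξ * aF δ ξ * h ξ * GamHat i δ ξ

/-- G_i[h; ε, ε̃, δ] := ∫₀^∞ ξ a_δ(ξ) h(ξ) Γ_i(ξ; ε, ε̃, δ) dξ -/
noncomputable def Gfull (i : ℕ) (δ ε εt : ℝ) (h : ℝ → ℝ) : ℝ :=
  ∫ ξ in Ioi (0:ℝ), ξ * aF δ ξ * h ξ * Gam i δ ε εt ξ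

/-! ### The denominator of `a_δ` -/

/-- The denominator `1 + z - (λ_LSW - δ) z^(1/3)` of `a_δ`. -/
noncomputable def Dn (δ z : ℝ) : ℝ := 1 + z - (lamLSW - δ) * z ^ ((1:ℝ)/3)

/-- The integrating factor `exp (∫₀ˣ a_δ)`. -/
noncomputable def Ef (δ x : ℝ) : ℝ := Real.exp (∫ y in (0:ℝ)..x, aF δ y)

/-- `r = 2^(-1/3)` is the double root of `1 + x³ - λ_LSW x`; rational bounds on it are all the
numerics that is needed. -/
lemma exists_root : ∃ r : ℝ, 0.79 < r ∧ r < 0.8 ∧ r ^ 3 = 1 / 2 ∧ lamLSW = 3 * r ^ 2 := by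
  have h0 : (0:ℝ) ≤ (1/2 : ℝ) ^ ((1:ℝ)/3) := by positivity
  have h3 : ((1/2 : ℝ) ^ ((1:ℝ)/3)) ^ 3 = 1 / 2 := by
    rw [← Real.rpow_natCast, ← Real.rpow_mul (by norm_num)]; norm_num
  refine ⟨_, ?_, ?_, h3, ?_⟩
  · by_contra! h
    have := pow_le_pow_left₀ h0 h 3
    rw [h3] at this; norm_num at this
  · by_contra! h
    have := pow_le_pow_left₀ (by norm_num) h 3
    rw [h3] at this; norm_num at this
  · rw [lamLSW, ← Real.rpow_natCast, ← Real.rpow_mul (by norm_num)]; norm_num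

lemma cbrt_pow {z : ℝ} (hz : 0 ≤ z) : (z ^ ((1:ℝ)/3)) ^ 3 = z := by
  rw [← Real.rpow_natCast, ← Real.rpow_mul hz]; norm_num

/-- In the variable `x = z^(1/3)` the denominator factors, with a double root when `δ = 0`. -/
lemma Dn_factor {r : ℝ} (hr3 : r ^ 3 = 1 / 2) (hl : lamLSW = 3 * r ^ 2) (δ : ℝ) {z : ℝ}
    (hz : 0 ≤ z) :
    Dn δ z = (z ^ ((1:ℝ)/3) - r) ^ 2 * (z ^ ((1:ℝ)/3) + 2 * r) + δ * z ^ ((1:ℝ)/3) := by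
  have h := cbrt_pow hz
  rw [Dn, hl]
  linear_combination 2 * -hr3 - h

lemma Dn_pos {δ : ℝ} (hδ : 0 < δ) {z : ℝ} (hz : 0 ≤ z) : 0 < Dn δ z := by
  obtain ⟨r, h1, -, hr3, hl⟩ := exists_root
  rw [Dn_factor hr3 hl δ hz]
  have hx : 0 ≤ z ^ ((1:ℝ)/3) := by positivity
  rcases hx.eq_or_lt with h | h
  · rw [← h]; nlinarith
  · have : 0 ≤ (z ^ ((1:ℝ)/3) - r) ^ 2 * (z ^ ((1:ℝ)/3) + 2 * r) := by positivity
    have : 0 < δ * z ^ ((1:ℝ)/3) := by positivity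
    linarith

lemma Dn_zero_pos {z : ℝ} (hz : 0 ≤ z) (hz2 : z < 1 / 2) : 0 < Dn 0 z := by
  obtain ⟨r, h1, -, hr3, hl⟩ := exists_root
  rw [Dn_factor hr3 hl 0 hz]
  have h := cbrt_pow hz
  have hx : 0 ≤ z ^ ((1:ℝ)/3) := by positivity
  have hne : z ^ ((1:ℝ)/3) - r ≠ 0 := by
    intro h0
    have : z ^ ((1:ℝ)/3) = r := by linarith
    rw [this, hr3] at h; linarith
  have := sq_pos_of_ne_zero hne
  have : 0 < (z ^ ((1:ℝ)/3) - r) ^ 2 * (z ^ ((1:ℝ)/3) + 2 * r) := by positivity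
  linarith

lemma Dn_le_two {δ : ℝ} (hδ : δ ≤ 1) {z : ℝ} (hz : 0 ≤ z) (hz1 : z ≤ 1) : Dn δ z ≤ 2 := by
  obtain ⟨r, h1, -, -, hl⟩ := exists_root
  have hx : 0 ≤ z ^ ((1:ℝ)/3) := by positivity
  have : 0 ≤ (lamLSW - δ) * z ^ ((1:ℝ)/3) := mul_nonneg (by rw [hl]; nlinarith) hx
  rw [Dn]; linarith

lemma Dn_one_ge {δ : ℝ} (hδ : 0 ≤ δ) : 1 / 20 ≤ Dn δ 1 := by
  obtain ⟨r, h1, h2, -, hl⟩ := exists_root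
  rw [Dn, hl, Real.one_rpow]; nlinarith

/-- To the right of `1/2` the denominator is bounded below uniformly in `δ`. -/
lemma Dn_ge {δ : ℝ} (hδ : 0 ≤ δ) {z : ℝ} (hz : 0.6 ≤ z) : 1 / 500 ≤ Dn δ z := by
  obtain ⟨r, h1, h2, hr3, hl⟩ := exists_root
  have hz0 : 0 ≤ z := by linarith
  rw [Dn_factor hr3 hl δ hz0]
  have h := cbrt_pow hz0
  have hx : 0 ≤ z ^ ((1:ℝ)/3) := by positivity
  have hx2 : 0.84 ≤ z ^ ((1:ℝ)/3) := by
    by_contra! hlt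
    have := pow_le_pow_left₀ hx hlt.le 3
    rw [h] at this; norm_num at this hz; linarith
  have h3 : (0.04:ℝ) ^ 2 ≤ (z ^ ((1:ℝ)/3) - r) ^ 2 :=
    pow_le_pow_left₀ (by norm_num) (by norm_num at *; linarith) 2
  have h4 : (1.5:ℝ) ≤ z ^ ((1:ℝ)/3) + 2 * r := by norm_num at *; linarith
  have := mul_le_mul h3 h4 (by norm_num) (by positivity)
  have : 0 ≤ δ * z ^ ((1:ℝ)/3) := by positivity
  norm_num at *; linarith

/-- Quadratic upper bound near the double root, up to the regularisation `δ`. -/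
lemma Dn_le {δ : ℝ} (hδ : 0 ≤ δ) {z : ℝ} (hz : 1 / 2 ≤ z) (hz1 : z ≤ 1) :
    Dn δ z ≤ 3 * (z - 1 / 2) ^ 2 + δ := by
  obtain ⟨r, h1, h2, hr3, hl⟩ := exists_root
  have hz0 : 0 ≤ z := by linarith
  rw [Dn_factor hr3 hl δ hz0]
  have h := cbrt_pow hz0
  have hx : 0 ≤ z ^ ((1:ℝ)/3) := by positivity
  have hx1 : z ^ ((1:ℝ)/3) ≤ 1 := Real.rpow_le_one hz0 hz1 (by norm_num)
  generalize z ^ ((1:ℝ)/3) = x at *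
  have hxr : r ≤ x := by
    by_contra! hlt
    have := pow_lt_pow_left₀ hlt hx (n := 3) (by norm_num)
    linarith
  have hr0 : (0:ℝ) < r := by linarith
  have hq : 1 ≤ x ^ 2 + x * r + r ^ 2 := by norm_num at h1; nlinarith
  have e : z - 1 / 2 = (x - r) * (x ^ 2 + x * r + r ^ 2) := by rw [← h, ← hr3]; ring
  have h5 : (x - r) ^ 2 ≤ (z - 1 / 2) ^ 2 := by
    rw [e]
    refine pow_le_pow_left₀ (by linarith) ?_ 2
    nlinarith
  have h6 : x + 2 * r ≤ 3 := by norm_num at h2; linarith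
  have := mul_le_mul h5 h6 (by positivity) (by positivity)
  nlinarith

lemma bF_zero_nonneg {z : ℝ} (hz : 0.4 ≤ z) : 0 ≤ bF 0 z := by
  obtain ⟨r, h1, h2, -, hl⟩ := exists_root
  have hz0 : 0 < z := by norm_num at hz; linarith
  have h := cbrt_pow hz0.le
  have hx : 0 < z ^ ((1:ℝ)/3) := by positivity
  have hx2 : 0.7 ≤ z ^ ((1:ℝ)/3) := by
    by_contra! hlt
    have := pow_le_pow_left₀ hx.le hlt.le 3
    rw [h] at this; norm_num at this hz; linarith
  have e : z ^ (-(2:ℝ)/3) = ((z ^ ((1:ℝ)/3)) ^ 2)⁻¹ := by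
    rw [← Real.rpow_natCast, ← Real.rpow_mul hz0.le, ← Real.rpow_neg hz0.le]; norm_num
  rw [bF, e, hl]
  have h7 : r ^ 2 * ((z ^ ((1:ℝ)/3)) ^ 2)⁻¹ ≤ 2 := by
    rw [← div_eq_mul_inv, div_le_iff₀ (by positivity)]
    norm_num at *; nlinarith
  linarith

/-! ### Closed forms of the exponentials -/

lemma Dn_continuous (δ : ℝ) : Continuous (Dn δ) := by
  unfold Dn
  have : Continuous fun z : ℝ => z ^ ((1:ℝ)/3) :=
    continuous_id.rpow_const (fun _ => Or.inr (by norm_num))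
  fun_prop

lemma aF_eq (δ z : ℝ) : aF δ z = (Dn δ z)⁻¹ := by rw [aF, Dn, one_div]

lemma aF_continuousOn {δ : ℝ} {s : Set ℝ} (h : ∀ z ∈ s, 0 < Dn δ z) : ContinuousOn (aF δ) s := by
  have : aF δ = fun z => (Dn δ z)⁻¹ := funext (aF_eq δ)
  rw [this]
  exact (Dn_continuous δ).continuousOn.inv₀ fun z hz => (h z hz).ne'

lemma ab_integrable {δ T : ℝ} (hT : 0 ≤ T) (h : ∀ z ∈ Icc 0 T, 0 < Dn δ z) :
    IntervalIntegrable (fun y => aF δ y * bF δ y) volume 0 T := by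
  have hb : IntervalIntegrable (bF δ) volume 0 T := by
    unfold bF
    exact intervalIntegrable_const.sub
      ((intervalIntegral.intervalIntegrable_rpow' (by norm_num)).const_mul _)
  refine hb.continuousOn_mul (aF_continuousOn ?_)
  rwa [uIcc_of_le hT]

lemma a_integrable {δ : ℝ} (hδ : 0 < δ) {s t : ℝ} (hs : 0 ≤ s) (ht : 0 ≤ t) :
    IntervalIntegrable (aF δ) volume s t :=
  (aF_continuousOn fun _ hz => Dn_pos hδ ((le_min hs ht).trans hz.1)).intervalIntegrable

/-- Since `b_δ = 1 + D_δ'`, one has `a_δ b_δ = a_δ + (log D_δ)'`, so that the exponential of its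
integral is explicit in terms of `D_δ` and `exp ∫ a_δ`. -/
lemma exp_ab {δ : ℝ} (hδ : 0 < δ) {z ξ : ℝ} (hz : 0 ≤ z) (h : z ≤ ξ) :
    Real.exp (∫ y in z..ξ, aF δ y * bF δ y) = Dn δ ξ * Ef δ ξ / (Dn δ z * Ef δ z) := by
  have hξ := hz.trans h
  have hab : IntervalIntegrable (fun y => aF δ y * bF δ y) volume z ξ :=
    (ab_integrable hξ fun y hy => Dn_pos hδ hy.1).mono_set
      (by rw [uIcc_of_le h, uIcc_of_le hξ]; exact Icc_subset_Icc_left hz)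
  have ha := a_integrable hδ hz hξ
  have key : ∫ y in z..ξ, (aF δ y * bF δ y - aF δ y)
      = Real.log (Dn δ ξ) - Real.log (Dn δ z) := by
    refine intervalIntegral.integral_eq_sub_of_hasDerivAt_of_le h
      (f := fun y => Real.log (Dn δ y)) ?_ ?_ (hab.sub ha)
    · exact (Dn_continuous δ).continuousOn.log fun y hy => (Dn_pos hδ (hz.trans hy.1)).ne'
    · intro y hy
      have hy0 : 0 < y := hz.trans_lt hy.1
      have hd : HasDerivAt (Dn δ) (1 - (lamLSW - δ) * ((1:ℝ)/3 * y ^ ((1:ℝ)/3 - 1))) y := by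
        have := ((hasDerivAt_id y).const_add 1).sub
          ((Real.hasDerivAt_rpow_const (p := (1:ℝ)/3) (Or.inl hy0.ne')).const_mul (lamLSW - δ))
        exact this
      refine (hd.log (Dn_pos hδ hy0.le).ne').congr_deriv ?_
      rw [aF_eq, bF, show (1:ℝ)/3 - 1 = -(2:ℝ)/3 by norm_num, div_eq_inv_mul]
      ring
  rw [intervalIntegral.integral_sub hab ha] at key
  have e : ∫ y in z..ξ, aF δ y * bF δ y = Real.log (Dn δ ξ) - Real.log (Dn δ z)
      + ((∫ y in (0:ℝ)..ξ, aF δ y) - ∫ y in (0:ℝ)..z, aF δ y) := by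
    rw [intervalIntegral.integral_interval_sub_left (a_integrable hδ le_rfl hξ)
      (a_integrable hδ le_rfl hz)]
    linarith
  rw [e, Real.exp_add, Real.exp_sub, Real.exp_sub, Real.exp_log (Dn_pos hδ hξ),
    Real.exp_log (Dn_pos hδ hz), Ef, Ef]
  rw [div_mul_div_comm]

lemma Ef_pos (δ x : ℝ) : 0 < Ef δ x := Real.exp_pos _

lemma Ef_continuousOn {δ : ℝ} (hδ : 0 < δ) : ContinuousOn (Ef δ) (Icc 0 1) := by
  have h := intervalIntegral.continuousOn_primitive_interval (μ := volume) (f := aF δ) (a := 0)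
    (b := 1) (by
      rw [uIcc_of_le zero_le_one]
      exact (aF_continuousOn fun z hz => Dn_pos hδ hz.1).integrableOn_Icc)
  rw [uIcc_of_le zero_le_one] at h
  exact h.rexp

lemma rhoF_eq {δ : ℝ} (hδ : 0 < δ) {ξ : ℝ} (h0 : 0 ≤ ξ) (h1 : ξ ≤ 1) :
    rhoF δ ξ = ξ * Ef δ ξ / (Dn δ 1 * Ef δ 1) := by
  have := (Dn_pos hδ h0).ne'
  have := (Dn_pos hδ zero_le_one).ne'
  have := (Ef_pos δ 1).ne'
  have := (Ef_pos δ ξ).ne'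
  rw [rhoF, Real.exp_neg, exp_ab hδ h0 h1, aF_eq]
  field_simp

/-- The integral `∫₀^ξ γ_i / (D_δ exp ∫ a_δ)`, the only part of `Γ̂_i` that depends on `i`. -/
noncomputable def Jf (i : ℕ) (δ ξ : ℝ) : ℝ := ∫ z in (0:ℝ)..ξ, gamF i z / (Dn δ z * Ef δ z)

lemma GamHat_eq (i : ℕ) {δ : ℝ} (hδ : 0 < δ) {ξ : ℝ} (h0 : 0 ≤ ξ) :
    GamHat i δ ξ = Dn δ ξ * Ef δ ξ * Jf i δ ξ := by
  rw [GamHat, Gam, Jf, ← intervalIntegral.integral_const_mul]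
  refine intervalIntegral.integral_congr fun z hz => ?_
  rw [uIcc_of_le h0] at hz
  simp only [zero_mul, sub_zero]
  rw [exp_ab hδ hz.1 hz.2]
  ring

lemma gamF_continuous (i : ℕ) : Continuous (gamF i) := by
  unfold gamF
  split_ifs <;> fun_prop

lemma gamF_mem (i : ℕ) {z : ℝ} (h0 : 0 ≤ z) (h1 : z ≤ 1) :
    0 ≤ gamF i z ∧ z ≤ gamF i z ∧ gamF i z ≤ 1 := by
  unfold gamF
  split_ifs <;> simp [h0, h1]

lemma J_integrand_continuousOn (i : ℕ) {δ : ℝ} (hδ : 0 < δ) :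
    ContinuousOn (fun z => gamF i z / (Dn δ z * Ef δ z)) (Icc 0 1) :=
  (gamF_continuous i).continuousOn.div ((Dn_continuous δ).continuousOn.mul (Ef_continuousOn hδ))
    fun z hz => (mul_pos (Dn_pos hδ hz.1) (Ef_pos δ z)).ne'

lemma J_integrable (i : ℕ) {δ : ℝ} (hδ : 0 < δ) {s t : ℝ} (hs : s ∈ Icc (0:ℝ) 1)
    (ht : t ∈ Icc (0:ℝ) 1) :
    IntervalIntegrable (fun z => gamF i z / (Dn δ z * Ef δ z)) volume s t :=
  ((J_integrand_continuousOn i hδ).mono (uIcc_subset_Icc hs ht)).intervalIntegrable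

lemma Jf_continuousOn (i : ℕ) {δ : ℝ} (hδ : 0 < δ) : ContinuousOn (Jf i δ) (Icc 0 1) := by
  have h := intervalIntegral.continuousOn_primitive_interval (μ := volume)
    (f := fun z => gamF i z / (Dn δ z * Ef δ z)) (a := 0) (b := 1) (by
      rw [uIcc_of_le zero_le_one]
      exact (J_integrand_continuousOn i hδ).integrableOn_Icc)
  rwa [uIcc_of_le zero_le_one] at h

/-- Because `γ_i ≤ 1`, the integrand of `Jf` is dominated by `-(d/dz) exp (-∫₀ᶻ a_δ)`. -/
lemma J_diff (i : ℕ) {δ : ℝ} (hδ : 0 < δ) {ξ : ℝ} (h0 : 0 ≤ ξ) (h1 : ξ ≤ 1) :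
    0 ≤ Ef δ ξ * (Jf i δ 1 - Jf i δ ξ) ∧ Ef δ ξ * (Jf i δ 1 - Jf i δ ξ) ≤ 1 := by
  have m0 : (0:ℝ) ∈ Icc (0:ℝ) 1 := by simp
  have m1 : (1:ℝ) ∈ Icc (0:ℝ) 1 := by simp
  have mξ : ξ ∈ Icc (0:ℝ) 1 := ⟨h0, h1⟩
  have e : Jf i δ 1 - Jf i δ ξ = ∫ z in ξ..1, gamF i z / (Dn δ z * Ef δ z) :=
    intervalIntegral.integral_interval_sub_left (J_integrable i hδ m0 m1) (J_integrable i hδ m0 mξ)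
  have hEc : ContinuousOn (fun z => -(Ef δ z)⁻¹) (Icc ξ 1) :=
    (((Ef_continuousOn hδ).mono (Icc_subset_Icc_left h0)).inv₀ fun z _ => (Ef_pos δ z).ne').neg
  have hint : IntervalIntegrable (fun z => aF δ z * (Ef δ z)⁻¹) volume ξ 1 := by
    refine ContinuousOn.intervalIntegrable ?_
    rw [uIcc_of_le h1]
    exact (aF_continuousOn fun z hz => Dn_pos hδ (h0.trans hz.1)).mul
      (((Ef_continuousOn hδ).mono (Icc_subset_Icc_left h0)).inv₀ fun z _ => (Ef_pos δ z).ne')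
  have ftc : ∫ z in ξ..1, aF δ z * (Ef δ z)⁻¹ = -(Ef δ 1)⁻¹ - -(Ef δ ξ)⁻¹ := by
    refine intervalIntegral.integral_eq_sub_of_hasDerivAt_of_le h1 hEc ?_ hint
    intro y hy
    have hy0 : 0 < y := h0.trans_lt hy.1
    have hc : ContinuousOn (aF δ) (Ioi 0) := aF_continuousOn fun z hz => Dn_pos hδ (le_of_lt hz)
    have hd : HasDerivAt (fun x => ∫ t in (0:ℝ)..x, aF δ t) (aF δ y) y :=
      intervalIntegral.integral_hasDerivAt_right (a_integrable hδ le_rfl hy0.le)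
        (hc.stronglyMeasurableAtFilter isOpen_Ioi y hy0)
        (hc.continuousAt (Ioi_mem_nhds hy0))
    refine (hd.exp.inv (Ef_pos δ y).ne').neg.congr_deriv ?_
    change -(-(Ef δ y * aF δ y) / Ef δ y ^ 2) = _
    have := (Ef_pos δ y).ne'
    field_simp
  have hle : ∫ z in ξ..1, gamF i z / (Dn δ z * Ef δ z) ≤ ∫ z in ξ..1, aF δ z * (Ef δ z)⁻¹ := by
    refine intervalIntegral.integral_mono_on h1 (J_integrable i hδ mξ m1) hint fun z hz => ?_
    rw [aF_eq, ← mul_inv, div_eq_mul_inv]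
    have := mul_pos (Dn_pos hδ (h0.trans hz.1)) (Ef_pos δ z)
    exact mul_le_of_le_one_left (by positivity) (gamF_mem i (h0.trans hz.1) hz.2).2.2
  have hge : 0 ≤ ∫ z in ξ..1, gamF i z / (Dn δ z * Ef δ z) := by
    refine intervalIntegral.integral_nonneg h1 fun z hz => ?_
    have := mul_pos (Dn_pos hδ (h0.trans hz.1)) (Ef_pos δ z)
    have := (gamF_mem i (h0.trans hz.1) hz.2).1
    positivity
  have hE := Ef_pos δ ξ
  rw [e]
  refine ⟨by positivity, ?_⟩
  rw [ftc] at hle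
  have h2 := mul_le_mul_of_nonneg_left hle hE.le
  have h3 : Ef δ ξ * (Ef δ ξ)⁻¹ = 1 := mul_inv_cancel₀ hE.ne'
  have : 0 < Ef δ ξ * (Ef δ 1)⁻¹ := mul_pos hE (inv_pos.2 (Ef_pos δ 1))
  nlinarith

/-! ### Divergence of `K_i^δ` -/

lemma Ef_ratio {δ : ℝ} (hδ : 0 < δ) {z ξ : ℝ} (hz : 0 ≤ z) (hξ : 0 ≤ ξ) :
    Ef δ ξ / Ef δ z = Real.exp (∫ y in z..ξ, aF δ y) := by
  rw [Ef, Ef, ← Real.exp_sub, intervalIntegral.integral_interval_sub_left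
    (a_integrable hδ le_rfl hξ) (a_integrable hδ le_rfl hz)]

lemma aF_nonneg {δ : ℝ} (hδ : 0 < δ) {z : ℝ} (hz : 0 ≤ z) : 0 ≤ aF δ z := by
  rw [aF_eq]; exact (inv_pos.2 (Dn_pos hδ hz)).le

/-- As `δ → 0` the integral of `a_δ` across the double root `1/2` blows up like `δ^(-1/2)`. -/
lemma a_blowup {s : ℝ} (hs : 0 < s) (hs2 : s ≤ 1 / 2) {z : ℝ} (h0 : 0 ≤ z) (h1 : z ≤ 1 / 2) :
    1 / (4 * s) ≤ ∫ y in z..1, aF (s ^ 2) y := by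
  have hδ : 0 < s ^ 2 := by positivity
  have hsub : ∫ y in (1/2:ℝ)..(1/2 + s), aF (s ^ 2) y ≤ ∫ y in z..1, aF (s ^ 2) y := by
    refine intervalIntegral.integral_mono_interval h1 (by linarith) (by linarith) ?_
      (a_integrable hδ h0 zero_le_one)
    refine (ae_restrict_iff' measurableSet_Ioc).2 (ae_of_all _ fun y hy => ?_)
    exact aF_nonneg hδ (h0.trans hy.1.le)
  have hlow : ∫ _ in (1/2:ℝ)..(1/2 + s), 1 / (4 * s ^ 2) ≤
      ∫ y in (1/2:ℝ)..(1/2 + s), aF (s ^ 2) y := by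
    refine intervalIntegral.integral_mono_on (by linarith) (by simp)
      (a_integrable hδ (by norm_num) (by linarith)) fun y hy => ?_
    rw [aF_eq, ← one_div]
    refine one_div_le_one_div_of_le (Dn_pos hδ (by linarith [hy.1])) ?_
    refine (Dn_le hδ.le hy.1 (by linarith [hy.2])).trans ?_
    nlinarith [hy.1, hy.2]
  rw [intervalIntegral.integral_const, smul_eq_mul] at hlow
  have e : (1 / 2 + s - 1 / 2) * (1 / (4 * s ^ 2)) = 1 / (4 * s) := by field_simp; ring
  linarith

lemma Kc_lower (i : ℕ) {s : ℝ} (hs : 0 < s) (hs2 : s ≤ 1 / 2) :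
    1 / (2560 * s) ≤ Kc i (s ^ 2) := by
  have hδ : 0 < s ^ 2 := by positivity
  have m1 : (1:ℝ) ∈ Icc (0:ℝ) 1 := by simp
  have m0 : (0:ℝ) ∈ Icc (0:ℝ) 1 := by simp
  rw [Kc, GamHat_eq i hδ zero_le_one, mul_assoc, Jf, ← intervalIntegral.integral_const_mul]
  have hnn : ∀ z ∈ Icc (0:ℝ) 1, 0 ≤ Ef (s ^ 2) 1 * (gamF i z / (Dn (s ^ 2) z * Ef (s ^ 2) z)) := by
    intro z hz
    have := Dn_pos hδ hz.1
    have := Ef_pos (s ^ 2) z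
    have := Ef_pos (s ^ 2) 1
    have := (gamF_mem i hz.1 hz.2).1
    positivity
  have hsub : ∫ z in (1/4:ℝ)..(1/2), Ef (s ^ 2) 1 * (gamF i z / (Dn (s ^ 2) z * Ef (s ^ 2) z)) ≤
      ∫ z in (0:ℝ)..1, Ef (s ^ 2) 1 * (gamF i z / (Dn (s ^ 2) z * Ef (s ^ 2) z)) := by
    refine intervalIntegral.integral_mono_interval (by norm_num) (by norm_num) (by norm_num) ?_
      ((J_integrable i hδ m0 m1).const_mul _)
    refine (ae_restrict_iff' measurableSet_Ioc).2 (ae_of_all _ fun y hy => ?_)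
    exact hnn y ⟨hy.1.le, hy.2⟩
  have hlow : ∫ _ in (1/4:ℝ)..(1/2), 1 / (32 * s) ≤
      ∫ z in (1/4:ℝ)..(1/2), Ef (s ^ 2) 1 * (gamF i z / (Dn (s ^ 2) z * Ef (s ^ 2) z)) := by
    refine intervalIntegral.integral_mono_on (by norm_num) (by simp)
      ((J_integrable i hδ (by norm_num) (by norm_num)).const_mul _) fun z hz => ?_
    have hz0 : 0 ≤ z := by linarith [hz.1]
    have hz1 : z ≤ 1 := by linarith [hz.2]
    have hD := Dn_pos hδ hz0
    have hE := Ef_pos (s ^ 2) z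
    have e : Ef (s ^ 2) 1 * (gamF i z / (Dn (s ^ 2) z * Ef (s ^ 2) z)) =
        (gamF i z / Dn (s ^ 2) z) * (Ef (s ^ 2) 1 / Ef (s ^ 2) z) := by field_simp
    have hg : 1 / 8 ≤ gamF i z / Dn (s ^ 2) z := by
      rw [le_div_iff₀ hD]
      have := Dn_le_two (δ := s ^ 2) (by nlinarith) hz0 hz1
      linarith [(gamF_mem i hz0 hz1).2.1, hz.1]
    have hx : 1 / (4 * s) ≤ Ef (s ^ 2) 1 / Ef (s ^ 2) z := by
      rw [Ef_ratio hδ hz0 zero_le_one]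
      have := a_blowup hs hs2 hz0 hz.2
      linarith [Real.add_one_le_exp (∫ y in z..1, aF (s ^ 2) y)]
    rw [e]
    calc 1 / (32 * s) = 1 / 8 * (1 / (4 * s)) := by field_simp; norm_num
      _ ≤ _ := mul_le_mul hg hx (by positivity) (by linarith)
  rw [intervalIntegral.integral_const, smul_eq_mul] at hlow
  calc 1 / (2560 * s) = 1 / 20 * ((1 / 2 - 1 / 4) * (1 / (32 * s))) := by field_simp; norm_num
    _ ≤ _ := mul_le_mul (Dn_one_ge hδ.le) (hlow.trans hsub) (by positivity) (Dn_pos hδ zero_le_one).le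

/-! ### Uniform bounds on `ρ_δ` -/

lemma rhoF_nonneg {δ : ℝ} (hδ : 0 < δ) {ξ : ℝ} (h0 : 0 ≤ ξ) : 0 ≤ rhoF δ ξ := by
  have := aF_nonneg hδ h0
  unfold rhoF; positivity

lemma rhoF_le {δ : ℝ} (hδ : 0 < δ) {ξ : ℝ} (h0 : 0 ≤ ξ) (h1 : ξ ≤ 1) : rhoF δ ξ ≤ 20 := by
  have hD := Dn_one_ge hδ.le
  have hmono : Ef δ ξ ≤ Ef δ 1 := by
    rw [← one_le_div (Ef_pos δ ξ), Ef_ratio hδ h0 zero_le_one]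
    exact Real.one_le_exp (intervalIntegral.integral_nonneg h1 fun z hz =>
      aF_nonneg hδ (h0.trans hz.1))
  have hE := Ef_pos δ 1
  rw [rhoF_eq hδ h0 h1, div_le_iff₀ (by positivity)]
  have := Ef_pos δ ξ
  nlinarith

lemma rhoF_ge {δ : ℝ} (hδ : 0 < δ) (hδ1 : δ ≤ 1) {ξ : ℝ} (h0 : 0.6 ≤ ξ) (h1 : ξ ≤ 1) :
    0.3 * Real.exp (-500) ≤ rhoF δ ξ := by
  have hξ : 0 ≤ ξ := by norm_num at h0; linarith
  have hD := Dn_pos hδ zero_le_one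
  have hD2 := Dn_le_two hδ1 zero_le_one le_rfl
  have hint : ∫ y in ξ..1, aF δ y ≤ ∫ _ in ξ..1, (500:ℝ) := by
    refine intervalIntegral.integral_mono_on h1 (a_integrable hδ hξ zero_le_one) (by simp)
      fun z hz => ?_
    rw [aF_eq, show (500:ℝ) = (1/500)⁻¹ by norm_num]
    exact inv_anti₀ (by norm_num) (Dn_ge hδ.le (h0.trans hz.1))
  rw [intervalIntegral.integral_const, smul_eq_mul] at hint
  have hx : Real.exp (-500) ≤ (Ef δ 1 / Ef δ ξ)⁻¹ := by
    rw [Ef_ratio hδ hξ zero_le_one, ← Real.exp_neg]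
    exact Real.exp_le_exp.2 (by nlinarith)
  have e : rhoF δ ξ = ξ / Dn δ 1 * (Ef δ 1 / Ef δ ξ)⁻¹ := by
    rw [rhoF_eq hδ hξ h1, inv_div]
    ring
  have hq : 0.3 ≤ ξ / Dn δ 1 := by
    rw [le_div_iff₀ hD]; norm_num at *; linarith
  rw [e]
  exact mul_le_mul hq hx (Real.exp_pos _).le (by positivity)

lemma rhoF_continuousOn {δ : ℝ} (hδ : 0 < δ) : ContinuousOn (rhoF δ) (Icc 0 1) := by
  refine ContinuousOn.congr (f := fun ξ => ξ * Ef δ ξ / (Dn δ 1 * Ef δ 1)) ?_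
    fun ξ hξ => rhoF_eq hδ hξ.1 hξ.2
  exact (continuousOn_id.mul (Ef_continuousOn hδ)).div_const _

/-! ### The difference `Ĝ_i - K_i R` -/

lemma h_integrable {h : ℝ → ℝ} (hm : Measurable h) {H : ℝ} (hH : ∀ z ∈ Icc (0:ℝ) 1, |h z| ≤ H)
    {s t : ℝ} (hs : s ∈ Icc (0:ℝ) 1) (ht : t ∈ Icc (0:ℝ) 1) : IntervalIntegrable h volume s t := by
  refine IntervalIntegrable.mono_fun' (g := fun _ => H) (by simp) hm.aestronglyMeasurable ?_
  refine (ae_restrict_iff' measurableSet_uIoc).2 (ae_of_all _ fun y hy => ?_)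
  exact hH y (uIcc_subset_Icc hs ht (uIoc_subset_uIcc hy))

/-- The difference `Ĝ_i - K_i R` stays bounded uniformly in `δ`. -/
lemma G_diff (i : ℕ) {δ : ℝ} (hδ : 0 < δ) {h : ℝ → ℝ} (hm : Measurable h) {H : ℝ}
    (hH : ∀ z ∈ Icc (0:ℝ) 1, |h z| ≤ H) : |Ghat i δ h - Kc i δ * Rdel δ h| ≤ H := by
  have m1 : (1:ℝ) ∈ Icc (0:ℝ) 1 := by simp
  have m0 : (0:ℝ) ∈ Icc (0:ℝ) 1 := by simp
  have hH0 : 0 ≤ H := (abs_nonneg _).trans (hH 0 m0)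
  have hhi := h_integrable hm hH m0 m1
  have hK := GamHat_eq i hδ zero_le_one
  have e1 : Ghat i δ h = ∫ ξ in (0:ℝ)..1, (ξ * Ef δ ξ * Jf i δ ξ) * h ξ := by
    refine intervalIntegral.integral_congr fun ξ hξ => ?_
    rw [uIcc_of_le zero_le_one] at hξ
    have := (Dn_pos hδ hξ.1).ne'
    rw [GamHat_eq i hδ hξ.1, aF_eq]
    field_simp
  have e2 : Kc i δ * Rdel δ h = ∫ ξ in (0:ℝ)..1, (ξ * Ef δ ξ * Jf i δ 1) * h ξ := by
    rw [Rdel, ← intervalIntegral.integral_const_mul]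
    refine intervalIntegral.integral_congr fun ξ hξ => ?_
    rw [uIcc_of_le zero_le_one] at hξ
    have := (Dn_pos hδ zero_le_one).ne'
    have := (Ef_pos δ 1).ne'
    rw [Kc, hK, rhoF_eq hδ hξ.1 hξ.2]
    field_simp
  have hc := continuousOn_id.mul (Ef_continuousOn hδ)
  have i1 : IntervalIntegrable (fun ξ => (ξ * Ef δ ξ * Jf i δ ξ) * h ξ) volume 0 1 := by
    refine hhi.continuousOn_mul ?_
    rw [uIcc_of_le zero_le_one]
    exact hc.mul (Jf_continuousOn i hδ)
  have i2 : IntervalIntegrable (fun ξ => (ξ * Ef δ ξ * Jf i δ 1) * h ξ) volume 0 1 := by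
    refine hhi.continuousOn_mul ?_
    rw [uIcc_of_le zero_le_one]
    exact hc.mul continuousOn_const
  rw [e1, e2, ← intervalIntegral.integral_sub i1 i2, ← Real.norm_eq_abs]
  refine (intervalIntegral.norm_integral_le_of_norm_le_const (C := H) fun ξ hξ => ?_).trans
    (by simp)
  rw [uIoc_of_le zero_le_one] at hξ
  have hJ := J_diff i hδ hξ.1.le hξ.2
  have e3 : ξ * Ef δ ξ * Jf i δ ξ * h ξ - ξ * Ef δ ξ * Jf i δ 1 * h ξ =
      -(ξ * (Ef δ ξ * (Jf i δ 1 - Jf i δ ξ)) * h ξ) := by ring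
  rw [e3, norm_neg, norm_mul, norm_mul, Real.norm_of_nonneg hξ.1.le, Real.norm_of_nonneg hJ.1]
  calc ξ * (Ef δ ξ * (Jf i δ 1 - Jf i δ ξ)) * ‖h ξ‖ ≤ 1 * H := by
        refine mul_le_mul (mul_le_one₀ hξ.2 hJ.1 hJ.2) (hH ξ ⟨hξ.1.le, hξ.2⟩) (norm_nonneg _)
          zero_le_one
    _ = H := one_mul H

/-! ### The LSW profile and its self-convolution -/

/-- The non-normalised LSW profile on `[0, 1/2]`. -/
noncomputable def Pf (z : ℝ) : ℝ := Real.exp (-∫ y in (0:ℝ)..z, aF 0 y * bF 0 y)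

lemma Pf_measurable : Measurable Pf := by
  have hab : Measurable fun y => aF 0 y * bF 0 y := by
    unfold aF bF; fun_prop
  have hm : ∀ s : Set (ℝ × ℝ), MeasurableSet s →
      StronglyMeasurable fun z => ∫ y, s.indicator (fun p : ℝ × ℝ => aF 0 p.2 * bF 0 p.2) (z, y) :=
    fun s hs => ((hab.comp measurable_snd).indicator hs).stronglyMeasurable.integral_prod_right'
  have h1 := hm {p | 0 < p.2 ∧ p.2 ≤ p.1} ((measurableSet_lt measurable_const measurable_snd).inter
    (measurableSet_le measurable_snd measurable_fst))
  have h2 := hm {p | p.1 < p.2 ∧ p.2 ≤ 0} ((measurableSet_lt measurable_fst measurable_snd).inter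
    (measurableSet_le measurable_snd measurable_const))
  have e : (fun z => ∫ y in (0:ℝ)..z, aF 0 y * bF 0 y) = fun z =>
      (∫ y, ({p | 0 < p.2 ∧ p.2 ≤ p.1} : Set (ℝ × ℝ)).indicator
        (fun p : ℝ × ℝ => aF 0 p.2 * bF 0 p.2) (z, y)) -
      ∫ y, ({p | p.1 < p.2 ∧ p.2 ≤ 0} : Set (ℝ × ℝ)).indicator
        (fun p : ℝ × ℝ => aF 0 p.2 * bF 0 p.2) (z, y) := by
    funext z
    rw [intervalIntegral, ← integral_indicator measurableSet_Ioc,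
      ← integral_indicator measurableSet_Ioc]
    rfl
  unfold Pf
  refine Real.measurable_exp.comp (Measurable.neg ?_)
  rw [e]
  exact (h1.sub h2).measurable

/-- Up to `z = 2/5` the exponent is bounded by an absolutely convergent integral, and on
`[2/5, 1/2)` the integrand `a₀ b₀` is nonnegative, which keeps the profile bounded up to the
singular point `1/2`. At `1/2` itself the integral diverges and has the default
value `0`, so `M` is taken to include `Pf (1/2)`. -/
lemma Pf_bounds : ∃ m M : ℝ, 0 < m ∧ 0 < M ∧ (∀ z ∈ Icc (0:ℝ) 0.4, m ≤ Pf z) ∧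
    ∀ z ∈ Icc (0:ℝ) (1/2), Pf z ≤ M := by
  have hint : ∀ T : ℝ, 0 ≤ T → T < 1/2 →
      IntervalIntegrable (fun y => aF 0 y * bF 0 y) volume 0 T := fun T h0 h1 =>
    ab_integrable h0 fun z hz => Dn_zero_pos hz.1 (hz.2.trans_lt h1)
  have h04 := hint 0.4 (by norm_num) (by norm_num)
  set L := ∫ y in (0:ℝ)..0.4, |aF 0 y * bF 0 y| with hL
  have habs : ∀ z ∈ Icc (0:ℝ) 0.4, |∫ y in (0:ℝ)..z, aF 0 y * bF 0 y| ≤ L := by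
    intro z hz
    refine (intervalIntegral.abs_integral_le_integral_abs hz.1).trans ?_
    exact intervalIntegral.integral_mono_interval le_rfl hz.1 hz.2
      (ae_of_all _ fun y => abs_nonneg _) h04.abs
  refine ⟨Real.exp (-L), Real.exp L + Pf (1/2), Real.exp_pos _,
    add_pos (Real.exp_pos _) (Real.exp_pos _), ?_, ?_⟩
  · intro z hz
    exact Real.exp_le_exp.2 (neg_le_neg (abs_le.1 (habs z hz)).2)
  · intro z hz
    rcases hz.2.eq_or_lt with h | h
    · rw [h]; linarith [Real.exp_pos L]
    · have key : -L ≤ ∫ y in (0:ℝ)..z, aF 0 y * bF 0 y := by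
        rcases le_total z 0.4 with h4 | h4
        · exact (abs_le.1 (habs z ⟨hz.1, h4⟩)).1
        · have hz4 := (hint z hz.1 h)
          have hnn : 0 ≤ ∫ y in (0.4:ℝ)..z, aF 0 y * bF 0 y := by
            refine intervalIntegral.integral_nonneg h4 fun y hy => ?_
            have hy0 : 0 ≤ y := le_trans (by norm_num) hy.1
            refine mul_nonneg ?_ (bF_zero_nonneg hy.1)
            rw [aF_eq]
            exact (inv_pos.2 (Dn_zero_pos hy0 (hy.2.trans_lt h))).le
          have e := intervalIntegral.integral_interval_sub_left hz4 h04
          have := (abs_le.1 (habs 0.4 ⟨by norm_num, le_rfl⟩)).1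
          linarith
      have : Pf z ≤ Real.exp L := Real.exp_le_exp.2 (by linarith)
      have : 0 < Pf (1/2) := Real.exp_pos _
      linarith

lemma PhiLSW_bounds : Measurable PhiLSW ∧ (∀ z, 0 ≤ PhiLSW z) ∧ ∃ m M : ℝ, 0 < m ∧ 0 < M ∧
    (∀ z ∈ Icc (0:ℝ) 0.4, m ≤ PhiLSW z) ∧ ∀ z, 0 ≤ z → PhiLSW z ≤ M := by
  obtain ⟨m, M, hm, hM, hlow, hup⟩ := Pf_bounds
  have hP : ∀ z, 0 < Pf z := fun z => Real.exp_pos _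
  set N := ∫ t in (0:ℝ)..(1/2 : ℝ), t * Pf t with hN
  have e : PhiLSW = fun z => if z ≤ 1/2 then Pf z / N else 0 := rfl
  have hNpos : 0 < N := by
    refine intervalIntegral.intervalIntegral_pos_of_pos_on ?_
      (fun t ht => mul_pos ht.1 (hP t)) (by norm_num)
    refine IntervalIntegrable.mono_fun' (g := fun _ => M) (by simp)
      (measurable_id.mul Pf_measurable).aestronglyMeasurable ?_
    refine (ae_restrict_iff' measurableSet_uIoc).2 (ae_of_all _ fun y hy => ?_)
    rw [uIoc_of_le (by norm_num)] at hy
    simp only [norm_mul]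
    rw [Real.norm_of_nonneg hy.1.le, Real.norm_of_nonneg (hP y).le]
    have := hup y ⟨hy.1.le, hy.2⟩
    nlinarith [hP y, hy.1, hy.2]
  refine ⟨?_, ?_, m / N, M / N, by positivity, by positivity, ?_, ?_⟩
  · rw [e]
    exact Measurable.ite measurableSet_Iic (Pf_measurable.div_const N) measurable_const
  · intro z
    rw [e]
    have := hP z
    simp only []
    split_ifs <;> positivity
  · intro z hz
    rw [e]
    have : z ≤ 1/2 := hz.2.trans (by norm_num)
    simp only [this, if_true]
    exact div_le_div_of_nonneg_right (hlow z hz) hNpos.le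
  · intro z hz
    rw [e]
    simp only []
    split_ifs with h
    · exact div_le_div_of_nonneg_right (hup z ⟨hz, h⟩) hNpos.le
    · positivity

lemma conv_bounds : ∃ k B : ℝ, 0 < k ∧ 0 < B ∧
    (∀ z ∈ Icc (0:ℝ) 1, 0 ≤ conv PhiLSW PhiLSW z ∧ conv PhiLSW PhiLSW z ≤ B) ∧
    ∀ z ∈ Icc (0.6:ℝ) 0.7, k ≤ conv PhiLSW PhiLSW z := by
  obtain ⟨hmeas, hnn, m, M, hm, hM, hlow, hup⟩ := PhiLSW_bounds
  have hbd : ∀ z y : ℝ, y ∈ Icc 0 z → PhiLSW (z - y) * PhiLSW y ≤ M * M := fun z y hy =>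
    mul_le_mul (hup _ (by linarith [hy.2])) (hup _ hy.1) (hnn _) hM.le
  have hint : ∀ z : ℝ, 0 ≤ z →
      IntervalIntegrable (fun y => PhiLSW (z - y) * PhiLSW y) volume 0 z := by
    intro z hz
    refine IntervalIntegrable.mono_fun' (g := fun _ => M * M) (by simp)
      ((hmeas.comp (measurable_const.sub measurable_id)).mul hmeas).aestronglyMeasurable ?_
    refine (ae_restrict_iff' measurableSet_uIoc).2 (ae_of_all _ fun y hy => ?_)
    rw [uIoc_of_le hz] at hy
    change ‖PhiLSW (z - y) * PhiLSW y‖ ≤ M * M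
    rw [Real.norm_of_nonneg (mul_nonneg (hnn _) (hnn _))]
    exact hbd z y ⟨hy.1.le, hy.2⟩
  refine ⟨1/2 * (0.05 * (m * m)), M * M, by positivity, by positivity, ?_, ?_⟩
  · intro z hz
    have h0 : 0 ≤ ∫ y in (0:ℝ)..z, PhiLSW (z - y) * PhiLSW y :=
      intervalIntegral.integral_nonneg hz.1 fun y _ => mul_nonneg (hnn _) (hnn _)
    have h1 : ∫ y in (0:ℝ)..z, PhiLSW (z - y) * PhiLSW y ≤ ∫ _ in (0:ℝ)..z, M * M :=
      intervalIntegral.integral_mono_on hz.1 (hint z hz.1) (by simp) fun y hy => hbd z y hy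
    rw [intervalIntegral.integral_const, smul_eq_mul] at h1
    have : (z - 0) * (M * M) ≤ M * M := by nlinarith [hz.2, mul_pos hM hM]
    have := mul_pos hM hM
    unfold conv
    constructor <;> linarith
  · intro z hz
    have hz0 : 0 ≤ z := le_trans (by norm_num) hz.1
    have hz6 := hz.1
    have hz7 := hz.2
    have h1 : ∫ y in (0.3:ℝ)..0.35, PhiLSW (z - y) * PhiLSW y ≤
        ∫ y in (0:ℝ)..z, PhiLSW (z - y) * PhiLSW y :=
      intervalIntegral.integral_mono_interval (by norm_num) (by norm_num)
        (le_trans (by norm_num) hz.1) (ae_of_all _ fun y => mul_nonneg (hnn _) (hnn _))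
        (hint z hz0)
    have h2 : ∫ _ in (0.3:ℝ)..0.35, m * m ≤ ∫ y in (0.3:ℝ)..0.35, PhiLSW (z - y) * PhiLSW y := by
      refine intervalIntegral.integral_mono_on (by norm_num) (by simp) ?_ fun y hy => ?_
      · refine (hint z hz0).mono_set ?_
        rw [uIcc_of_le hz0, uIcc_of_le (by norm_num)]
        exact Icc_subset_Icc (by norm_num) (by norm_num at *; linarith)
      · obtain ⟨hy3, hy4⟩ := hy
        refine mul_le_mul (hlow _ ⟨?_, ?_⟩) (hlow _ ⟨?_, ?_⟩) hm.le (hnn _) <;>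
          norm_num at * <;> linarith
    rw [intervalIntegral.integral_const, smul_eq_mul] at h2
    unfold conv
    norm_num at *
    linarith

/-! ### Bounds on `R_δ[h]` -/

/-- The `Z`-norm controls the values on `[0, 1]`; the hypotheses make the supremum in `normSup` that
of a bounded set, so that it is not the default value `0`. -/
lemma pointwise_close {β₁ β₂ μ B : ℝ} {h g : ℝ → ℝ} (hh : memZ β₁ β₂ h)
    (hg : ∀ z ∈ Icc (0:ℝ) 1, |g z| ≤ B) (hle : normZ β₁ β₂ (fun z => h z - g z) ≤ μ) :
    ∀ z ∈ Icc (0:ℝ) 1, |h z - g z| ≤ μ := by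
  intro z hz
  obtain ⟨-, ⟨A, hA⟩, -⟩ := hh
  have hb : BddAbove ((fun z => |h z - g z|) '' Icc (0:ℝ) 1) := by
    refine ⟨A + B, ?_⟩
    rintro _ ⟨y, hy, rfl⟩
    exact (abs_sub _ _).trans (add_le_add (hA ⟨y, hy, rfl⟩) (hg y hy))
  have h1 : |h z - g z| ≤ normSup (fun z => h z - g z) := le_csSup hb ⟨z, hz, rfl⟩
  have h2 : 0 ≤ normTail β₁ β₂ (fun z => h z - g z) := by
    refine Real.sSup_nonneg ?_
    rintro _ ⟨y, hy, rfl⟩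
    have : (0:ℝ) ≤ y := zero_le_one.trans hy
    positivity
  unfold normZ at hle
  linarith

lemma R_upper {δ : ℝ} (hδ : 0 < δ) {h : ℝ → ℝ} {H : ℝ}
    (hH : ∀ z ∈ Icc (0:ℝ) 1, |h z| ≤ H) : Rdel δ h ≤ 20 * H := by
  refine (le_abs_self _).trans ?_
  rw [← Real.norm_eq_abs]
  refine (intervalIntegral.norm_integral_le_of_norm_le_const (C := 20 * H) fun ξ hξ => ?_).trans
    (by simp)
  rw [uIoc_of_le zero_le_one] at hξ
  rw [norm_mul, Real.norm_of_nonneg (rhoF_nonneg hδ hξ.1.le)]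
  exact mul_le_mul (rhoF_le hδ hξ.1.le hξ.2) (hH ξ ⟨hξ.1.le, hξ.2⟩) (norm_nonneg _) (by norm_num)

/-- Only the mass of `ρ_δ` on `[0.6, 0.7]` is used: there both `ρ_δ` and `Φ_LSW * Φ_LSW` are bounded
below, while `h ≥ -μ` on the rest of `[0, 1]`. -/
lemma R_lower {δ : ℝ} (hδ : 0 < δ) (hδ1 : δ ≤ 1) {h : ℝ → ℝ} (hm : Measurable h) {H k μ : ℝ}
    (hH : ∀ z ∈ Icc (0:ℝ) 1, |h z| ≤ H) (hk : 0 ≤ k) (hμ : 0 ≤ μ)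
    (hneg : ∀ z ∈ Icc (0:ℝ) 1, 0 ≤ h z + μ) (hpos : ∀ z ∈ Icc (0.6:ℝ) 0.7, k ≤ h z + μ) :
    0.03 * Real.exp (-500) * k - 20 * μ ≤ Rdel δ h := by
  have m1 : (1:ℝ) ∈ Icc (0:ℝ) 1 := by simp
  have m0 : (0:ℝ) ∈ Icc (0:ℝ) 1 := by simp
  have hρ := rhoF_continuousOn hδ
  have i1 : IntervalIntegrable (fun ξ => rhoF δ ξ * h ξ) volume 0 1 := by
    refine (h_integrable hm hH m0 m1).continuousOn_mul ?_
    rwa [uIcc_of_le zero_le_one]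
  have i0 : IntervalIntegrable (rhoF δ) volume 0 1 := by
    refine ContinuousOn.intervalIntegrable ?_
    rwa [uIcc_of_le zero_le_one]
  have i2 : IntervalIntegrable (fun ξ => rhoF δ ξ * μ) volume 0 1 := i0.mul_const μ
  have i3 : IntervalIntegrable (fun ξ => rhoF δ ξ * (h ξ + μ)) volume 0 1 := by
    simpa only [mul_add] using i1.add i2
  have e : ∫ ξ in (0:ℝ)..1, rhoF δ ξ * (h ξ + μ) =
      Rdel δ h + ∫ ξ in (0:ℝ)..1, rhoF δ ξ * μ := by
    rw [Rdel, ← intervalIntegral.integral_add i1 i2]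
    simp only [mul_add]
  have hup : ∫ ξ in (0:ℝ)..1, rhoF δ ξ * μ ≤ ∫ _ in (0:ℝ)..1, 20 * μ :=
    intervalIntegral.integral_mono_on zero_le_one i2 (by simp) fun ξ hξ =>
      mul_le_mul_of_nonneg_right (rhoF_le hδ hξ.1 hξ.2) hμ
  have hsub : ∫ ξ in (0.6:ℝ)..0.7, rhoF δ ξ * (h ξ + μ) ≤
      ∫ ξ in (0:ℝ)..1, rhoF δ ξ * (h ξ + μ) := by
    refine intervalIntegral.integral_mono_interval (by norm_num) (by norm_num) (by norm_num) ?_ i3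
    refine (ae_restrict_iff' measurableSet_Ioc).2 (ae_of_all _ fun y hy => ?_)
    exact mul_nonneg (rhoF_nonneg hδ hy.1.le) (hneg y ⟨hy.1.le, hy.2⟩)
  have hlow : ∫ _ in (0.6:ℝ)..0.7, 0.3 * Real.exp (-500) * k ≤
      ∫ ξ in (0.6:ℝ)..0.7, rhoF δ ξ * (h ξ + μ) := by
    refine intervalIntegral.integral_mono_on (by norm_num) (by simp) ?_ fun ξ hξ => ?_
    · refine i3.mono_set ?_
      rw [uIcc_of_le zero_le_one, uIcc_of_le (by norm_num)]
      exact Icc_subset_Icc (by norm_num) (by norm_num)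
    · have h1 : ξ ≤ 1 := hξ.2.trans (by norm_num)
      have h0 : 0 ≤ ξ := le_trans (by norm_num) hξ.1
      exact mul_le_mul (rhoF_ge hδ hδ1 hξ.1 h1) (hpos ξ hξ) hk (rhoF_nonneg hδ h0)
  rw [intervalIntegral.integral_const, smul_eq_mul] at hup hlow
  norm_num at *
  linarith

/-- bounds on R_δ[h] and approximation Ĝ_i ≈ K_i^δ R_δ[h]. -/
theorem stmt15 (β₁ β₂ : ℝ) (hβ₁ : 0 < β₁) (hβ₂ : 1 < β₂) :
    ∃ c C μ δ₀ : ℝ, 0 < c ∧ 0 < C ∧ 0 < μ ∧ 0 < δ₀ ∧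
      (∀ δ ∈ Ioc (0:ℝ) δ₀, ∀ h : ℝ → ℝ, memZ β₁ β₂ h →
        normZ β₁ β₂ (fun z => h z - conv PhiLSW PhiLSW z) ≤ μ →
        c ≤ Rdel δ h ∧ Rdel δ h ≤ C) ∧
      (∀ η : ℝ, 0 < η → ∃ δ₁ : ℝ, 0 < δ₁ ∧ δ₁ ≤ δ₀ ∧
        ∀ δ ∈ Ioc (0:ℝ) δ₁, ∀ h : ℝ → ℝ, memZ β₁ β₂ h →
          normZ β₁ β₂ (fun z => h z - conv PhiLSW PhiLSW z) ≤ μ →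
          ∀ i ∈ ({1, 2} : Set ℕ),
            |Ghat i δ h - Kc i δ * Rdel δ h| ≤ η * Kc i δ * Rdel δ h) := by
  obtain ⟨k, B, hk, hB, hconv, hconvk⟩ := conv_bounds
  set q : ℝ := 0.03 * Real.exp (-500) * k with hq
  have hqpos : 0 < q := by positivity
  -- `q - 20 μ ≥ q / 2` is what makes the lower bound for `R` survive the perturbation
  set μ : ℝ := q / 40 with hμdef
  have hμ : 0 < μ := by positivity
  set H : ℝ := B + μ with hHdef
  have hH : 0 < H := by positivity
  have hclose : ∀ h : ℝ → ℝ, memZ β₁ β₂ h →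
      normZ β₁ β₂ (fun z => h z - conv PhiLSW PhiLSW z) ≤ μ →
      ∀ z ∈ Icc (0:ℝ) 1, |h z - conv PhiLSW PhiLSW z| ≤ μ := fun h hh hle =>
    pointwise_close hh (B := B) (fun z hz => by
      rw [abs_of_nonneg (hconv z hz).1]; exact (hconv z hz).2) hle
  have hbound : ∀ h : ℝ → ℝ, memZ β₁ β₂ h →
      normZ β₁ β₂ (fun z => h z - conv PhiLSW PhiLSW z) ≤ μ →
      ∀ z ∈ Icc (0:ℝ) 1, |h z| ≤ H := fun h hh hle z hz => by
    have h1 := abs_le.1 (hclose h hh hle z hz)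
    have h2 := hconv z hz
    exact abs_le.2 ⟨by linarith, by linarith⟩
  have hR : ∀ δ ∈ Ioc (0:ℝ) (1/4), ∀ h : ℝ → ℝ, memZ β₁ β₂ h →
      normZ β₁ β₂ (fun z => h z - conv PhiLSW PhiLSW z) ≤ μ →
      q / 2 ≤ Rdel δ h ∧ Rdel δ h ≤ 20 * H := by
    intro δ hδ h hh hle
    refine ⟨?_, R_upper hδ.1 (hbound h hh hle)⟩
    have := R_lower hδ.1 (by linarith [hδ.2]) hh.1 (hbound h hh hle) hk.le hμ.le
      (fun z hz => by
        have h1 := abs_le.1 (hclose h hh hle z hz)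
        linarith [(hconv z hz).1])
      (fun z hz => by
        have h1 := abs_le.1 (hclose h hh hle z
          ⟨le_trans (by norm_num) hz.1, hz.2.trans (by norm_num)⟩)
        linarith [hconvk z hz])
    linarith
  refine ⟨q / 2, 20 * H, μ, 1/4, by positivity, by positivity, hμ, by norm_num, hR, ?_⟩
  intro η hη
  -- `K_i ≥ 1 / (2560 √δ)` exceeds `2 H / (η q)` as soon as `√δ ≤ t`
  set t : ℝ := η * q / (5120 * H) with ht
  have htpos : 0 < t := by positivity
  refine ⟨min (1/4) (t ^ 2), by positivity, min_le_left _ _, ?_⟩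
  intro δ hδ h hh hle i _
  have hδ4 : δ ≤ 1/4 := hδ.2.trans (min_le_left _ _)
  have hδt : δ ≤ t ^ 2 := hδ.2.trans (min_le_right _ _)
  obtain ⟨hR1, -⟩ := hR δ ⟨hδ.1, hδ4⟩ h hh hle
  have hs : 0 < Real.sqrt δ := Real.sqrt_pos.2 hδ.1
  have hst : Real.sqrt δ ≤ t := Real.sqrt_le_iff.2 ⟨htpos.le, hδt⟩
  have hs2 : Real.sqrt δ ≤ 1/2 := Real.sqrt_le_iff.2 ⟨by norm_num, by linarith⟩
  have hK := Kc_lower i hs hs2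
  rw [Real.sq_sqrt hδ.1.le] at hK
  have hKt : 1 / (2560 * t) ≤ Kc i δ :=
    (one_div_le_one_div_of_le (by positivity) (by linarith)).trans hK
  have hKpos : 0 < Kc i δ := lt_of_lt_of_le (by positivity) hKt
  refine (G_diff i hδ.1 hh.1 (hbound h hh hle)).trans ?_
  calc H = η * (1 / (2560 * t)) * (q / 2) := by rw [ht]; field_simp; norm_num
    _ ≤ η * Kc i δ * Rdel δ h := by gcongr
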